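/- For every integer n ≥ 2 there exists D such that for all d ≥ D, every prime power q, every λ ∈ 𝔽_q, and every A ∈ GL_{n+1}(𝔽_q) that is not a scalar matrix, the dimension of P^{A,λ} over 𝔽_q is at most binom(d+n, n) − binom(d − ⌊d/2⌋ + n − 1, n). -/

import Mathlib

/-!
The bound holds for all `d ≥ 1`. Put `m = ⌊d/2⌋ + 1`. Since `A` is not scalar, some linear form
`ℓ` is not proportional to `ℓ ∘ A` (`exists_linearIndependent_vecMul`), so that `ℓ` and `ℓ ∘ A`
are coprime (`isRelPrime_linForm`). Let `W` be the space of forms of degree `d` divisible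
by `ℓ ^ m`. If `f ∈ W` satisfies `f ∘ A = λ f`, then either `λ = 0`, and `f = 0` because `A` is
invertible, or `f` is also divisible by `(ℓ ∘ A) ^ m`, hence by `ℓ ^ m * (ℓ ∘ A) ^ m`, whose degree
`2 m` exceeds `d`, so again `f = 0`. Hence `P^{A,λ}` meets `W` trivially, and
`W ≅ P_{d - m}` has dimension `binom(d - m + n, n) = binom(d - ⌊d/2⌋ + n - 1, n)`
(`finrank_forms`).
-/

open MvPolynomial

/-- Substitution of variables by the linear forms given by the rows of `A`. -/
noncomputable def substMap {F : Type*} [Field F] {n : ℕ}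
    (A : Matrix (Fin (n+1)) (Fin (n+1)) F) :
    MvPolynomial (Fin (n+1)) F →ₗ[F] MvPolynomial (Fin (n+1)) F :=
  (aeval fun k => ∑ l, A k l • X l).toLinearMap

/-- The subspace `P^{A,λ}` of homogeneous degree `d` polynomials with `λ • f = f ∘ A`. -/
noncomputable def Psub (F : Type*) [Field F] (n d : ℕ)
    (A : Matrix (Fin (n+1)) (Fin (n+1)) F) (lam : F) :
    Submodule F (MvPolynomial (Fin (n+1)) F) :=
  homogeneousSubmodule (Fin (n+1)) F d ⊓
    LinearMap.ker (substMap A - lam • LinearMap.id)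

/-- A nonzero homogeneous polynomial is smooth if `f` and its partial derivatives have no
common zero besides the origin over the algebraic closure. -/
def IsSmoothPoly (F : Type*) [Field F] (n : ℕ) (f : MvPolynomial (Fin (n+1)) F) : Prop :=
  ∀ x : Fin (n+1) → AlgebraicClosure F,
    (aeval x f = 0 ∧ ∀ i, aeval x (pderiv i f) = 0) → x = 0

def SmoothSet (F : Type*) [Field F] (n d : ℕ) : Set (MvPolynomial (Fin (n+1)) F) :=
  {f | f ≠ 0 ∧ f.IsHomogeneous d ∧ IsSmoothPoly F n f}

/-- Nonzero polynomials up to scalar: quotient by the `Fˣ`-scaling action. -/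
abbrev HypQuot (F : Type*) [Field F] (n : ℕ) :=
  Quotient (MulAction.orbitRel Fˣ (MvPolynomial (Fin (n+1)) F))

/-- The set `S_{n,d}` of smooth degree `d` hypersurfaces in `ℙⁿ`. -/
def SND (F : Type*) [Field F] (n d : ℕ) : Set (HypQuot F n) :=
  {X | ∃ f ∈ SmoothSet F n d, Quotient.mk _ f = X}

/-- `PGL_{n+1}(F)`. -/
abbrev PGL (F : Type*) [Field F] (n : ℕ) :=
  GL (Fin (n+1)) F ⧸ Subgroup.center (GL (Fin (n+1)) F)

/-- The automorphisms over `F` of the hypersurface cut out by `f`: classes `[A]` in `PGL`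
such that `f ∘ A = λ • f` for some scalar `λ ∈ Fˣ`. -/
def AutSetPoly (F : Type*) [Field F] (n : ℕ) (f : MvPolynomial (Fin (n+1)) F) :
    Set (PGL F n) :=
  {a | ∃ A : GL (Fin (n+1)) F, QuotientGroup.mk A = a ∧
    ∃ c : Fˣ, substMap (A : Matrix (Fin (n+1)) (Fin (n+1)) F) f = (c : F) • f}

/-- The automorphism group of a hypersurface class. -/
def AutClass (F : Type*) [Field F] (n : ℕ) (X : HypQuot F n) : Set (PGL F n) :=
  {a | ∃ f, Quotient.mk _ f = X ∧ a ∈ AutSetPoly F n f}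

/-- Stars and bars: the monomials of degree `d` form a basis of the forms of degree `d`. -/
theorem finrank_forms (F : Type*) [Field F] (n d : ℕ) :
    Module.finrank F (homogeneousSubmodule (Fin (n + 1)) F d) = (d + n).choose n := by
  have h : homogeneousSubmodule (Fin (n + 1)) F d
      = restrictSupport F {m : Fin (n + 1) →₀ ℕ | m.degree = d} := by
    rw [homogeneousSubmodule_eq_finsupp_supported]; rfl
  rw [h, Module.finrank_eq_nat_card_basis (basisRestrictSupport F _)]
  have e : {m : Fin (n + 1) →₀ ℕ | m.degree = d} ≃ Sym (Fin (n + 1)) d :=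
    (Sym.equivNatSum (Fin (n + 1)) d).symm
  rw [Nat.card_congr e, Nat.card_eq_fintype_card, Sym.card_sym_eq_choose, Fintype.card_fin]
  have : n + 1 + d - 1 = d + n := by omega
  rw [this, Nat.choose_symm_add]

/-- The linear form with coefficient vector `v`. -/
noncomputable def linForm {F : Type*} [Field F] {n : ℕ} (v : Fin (n + 1) → F) :
    MvPolynomial (Fin (n + 1)) F :=
  ∑ i, v i • X i

theorem coeff_linForm {F : Type*} [Field F] {n : ℕ} (v : Fin (n + 1) → F) (i : Fin (n + 1)) :
    coeff (Finsupp.single i 1) (linForm v) = v i := by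
  classical
  simp [linForm, coeff_sum, coeff_X, Finsupp.single_left_inj]

theorem linForm_smul {F : Type*} [Field F] {n : ℕ} (c : F) (v : Fin (n + 1) → F) :
    linForm (c • v) = c • linForm v := by
  simp [linForm, Finset.smul_sum, mul_smul]

theorem linForm_injective {F : Type*} [Field F] {n : ℕ} :
    Function.Injective (linForm : (Fin (n + 1) → F) → MvPolynomial (Fin (n + 1)) F) :=
  fun v w h => funext fun i => by rw [← coeff_linForm v, h, coeff_linForm]

theorem linForm_ne_zero {F : Type*} [Field F] {n : ℕ} {v : Fin (n + 1) → F} (hv : v ≠ 0) :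
    linForm v ≠ 0 := fun h => hv (linForm_injective (by rw [h]; simp [linForm]))

theorem isHomogeneous_linForm {F : Type*} [Field F] {n : ℕ} (v : Fin (n + 1) → F) :
    (linForm v).IsHomogeneous 1 :=
  (homogeneousSubmodule _ F 1).sum_mem fun i _ =>
    Submodule.smul_mem _ _ (isHomogeneous_X F i)

theorem substMap_mul {F : Type*} [Field F] {n : ℕ} (A : Matrix (Fin (n + 1)) (Fin (n + 1)) F)
    (f g : MvPolynomial (Fin (n + 1)) F) :
    substMap A (f * g) = substMap A f * substMap A g := by
  simp [substMap]

theorem substMap_linForm {F : Type*} [Field F] {n : ℕ}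
    (A : Matrix (Fin (n + 1)) (Fin (n + 1)) F) (v : Fin (n + 1) → F) :
    substMap A (linForm v) = linForm (Matrix.vecMul v A) := by
  simp only [substMap, linForm, AlgHom.toLinearMap_apply, map_sum, map_smul, aeval_X,
    Matrix.vecMul, dotProduct, Finset.smul_sum, Finset.sum_smul, smul_smul]
  exact Finset.sum_comm

theorem substMap_pow {F : Type*} [Field F] {n : ℕ} (A : Matrix (Fin (n + 1)) (Fin (n + 1)) F)
    (f : MvPolynomial (Fin (n + 1)) F) (m : ℕ) :
    substMap A (f ^ m) = substMap A f ^ m := by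
  simp [substMap]

theorem substMap_comp {F : Type*} [Field F] {n : ℕ} (A B : Matrix (Fin (n + 1)) (Fin (n + 1)) F)
    (f : MvPolynomial (Fin (n + 1)) F) :
    substMap A (substMap B f) = substMap (B * A) f := by
  have : (aeval fun k => ∑ l, A k l • X l :
      MvPolynomial (Fin (n + 1)) F →ₐ[F] MvPolynomial (Fin (n + 1)) F).comp
        (aeval fun k => ∑ l, B k l • X l) = aeval fun k => ∑ l, (B * A) k l • X l := by
    ext1 k
    simp only [AlgHom.comp_apply, aeval_X, map_sum, map_smul, Finset.smul_sum, smul_smul,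
      Matrix.mul_apply, Finset.sum_smul]
    exact Finset.sum_comm
  exact DFunLike.congr_fun this f

theorem substMap_one {F : Type*} [Field F] {n : ℕ} (f : MvPolynomial (Fin (n + 1)) F) :
    substMap (1 : Matrix (Fin (n + 1)) (Fin (n + 1)) F) f = f := by
  simp [substMap, Matrix.one_apply]

theorem substMap_injective {F : Type*} [Field F] {n : ℕ} (A : GL (Fin (n + 1)) F) :
    Function.Injective (substMap (A : Matrix (Fin (n + 1)) (Fin (n + 1)) F)) :=
  Function.LeftInverse.injective (g := substMap (A⁻¹ : GL (Fin (n + 1)) F).val) fun f => by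
    rw [substMap_comp, ← Units.val_mul, mul_inv_cancel, Units.val_one, substMap_one]

/-- Non-proportional linear forms are coprime: a common factor of degree one would be
proportional to both. -/
theorem isRelPrime_linForm {F : Type*} [Field F] {n : ℕ} {v w : Fin (n + 1) → F}
    (h : LinearIndependent F ![v, w]) : IsRelPrime (linForm v) (linForm w) := by
  have hv : v ≠ 0 := h.ne_zero 0
  have hw : w ≠ 0 := h.ne_zero 1
  -- A divisor of a nonzero linear form is a constant or associated to the form.
  have key : ∀ {u : Fin (n + 1) → F}, u ≠ 0 → ∀ g : MvPolynomial (Fin (n + 1)) F,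
      g ∣ linForm u → g.totalDegree ≠ 0 → ∃ c : F, linForm u = c • g := by
    rintro u hu g ⟨e, he⟩ hg
    have h0 := linForm_ne_zero hu
    have hd := (isHomogeneous_linForm u).totalDegree h0
    rw [he] at h0
    rw [he, totalDegree_mul_of_isDomain (left_ne_zero_of_mul h0) (right_ne_zero_of_mul h0)] at hd
    obtain he' := totalDegree_eq_zero_iff_eq_C.1 (show e.totalDegree = 0 by omega)
    exact ⟨coeff 0 e, by rw [he, smul_eq_C_mul, ← he', mul_comm]⟩
  intro g hgv hgw
  by_cases hg : g.totalDegree = 0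
  · have hg0 : g ≠ 0 := fun h0 => linForm_ne_zero hv (zero_dvd_iff.1 (h0 ▸ hgv))
    rw [totalDegree_eq_zero_iff_eq_C.1 hg] at hg0 ⊢
    exact (isUnit_iff_ne_zero.2 fun h0 => hg0 (by rw [h0, C_0])).map C
  · obtain ⟨a, ha⟩ := key hv g hgv hg
    obtain ⟨b, hb⟩ := key hw g hgw hg
    have hrel : b • v + (-a) • w = 0 := by
      have : b • v = a • w := linForm_injective (by
        rw [linForm_smul, linForm_smul, ha, hb, smul_comm])
      rw [this, neg_smul, add_neg_cancel]
    have hb0 := (LinearIndependent.pair_iff.1 h b (-a) hrel).1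
    exact absurd (by rw [hb, hb0, zero_smul]) (linForm_ne_zero hw)

/-- A matrix for which every row vector is an eigenvector is scalar. -/
theorem exists_linearIndependent_vecMul {F : Type*} [Field F] {n : ℕ}
    (A : Matrix (Fin (n + 1)) (Fin (n + 1)) F)
    (hA : ¬∃ μ : F, A = μ • (1 : Matrix (Fin (n + 1)) (Fin (n + 1)) F)) :
    ∃ v, LinearIndependent F ![v, Matrix.vecMul v A] := by
  by_contra! h
  obtain ⟨μ, hμ⟩ := LinearMap.exists_eq_smul_id_of_forall_notLinearIndependent
    (f := A.vecMulLinear) fun v => by simpa using h v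
  refine hA ⟨μ, ?_⟩
  ext i j
  have := congrFun (DFunLike.congr_fun hμ (Pi.single i 1)) j
  simpa [Matrix.one_apply, Pi.single_apply, eq_comm] using this

/-- For every `n ≥ 2` there exists `D` such that for all `d ≥ D`, every
finite field `𝔽_q`, every `λ ∈ 𝔽_q` and every non-scalar `A ∈ GL_{n+1}(𝔽_q)`,
`dim P^{A,λ} ≤ binom(d+n,n) - binom(d - ⌊d/2⌋ + n - 1, n)`. -/
theorem dim_Psub_le (n : ℕ) (hn : 2 ≤ n) :
    ∃ D : ℕ, ∀ d ≥ D, ∀ (F : Type) [Field F] [Fintype F] (lam : F)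
      (A : GL (Fin (n+1)) F),
      (¬∃ μ : F, (A : Matrix (Fin (n+1)) (Fin (n+1)) F) = μ • (1 : Matrix (Fin (n+1)) (Fin (n+1)) F)) →
      Module.finrank F (Psub F n d (A : Matrix (Fin (n+1)) (Fin (n+1)) F) lam) ≤
        (d + n).choose n - (d - d / 2 + n - 1).choose n := by
  refine ⟨1, fun d hd F _ _ lam A hA => ?_⟩
  obtain ⟨v, hv⟩ := exists_linearIndependent_vecMul _ hA
  set w := Matrix.vecMul v (A : Matrix (Fin (n+1)) (Fin (n+1)) F) with hw
  have hv0 : linForm v ≠ 0 := linForm_ne_zero (hv.ne_zero 0)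
  have hw0 : linForm w ≠ 0 := linForm_ne_zero (hv.ne_zero 1)
  -- The least exponent exceeding `d / 2`; the cofactor then has degree `k = ⌈d / 2⌉ - 1`.
  set m := d / 2 + 1 with hm
  obtain ⟨k, hk⟩ : ∃ k, d = m + k := ⟨d - m, by omega⟩
  have hinj : Function.Injective (LinearMap.mulLeft F (linForm v ^ m)) :=
    mul_right_injective₀ (pow_ne_zero _ hv0)
  set W := (homogeneousSubmodule (Fin (n+1)) F k).map (LinearMap.mulLeft F (linForm v ^ m)) with hW
  have hWd : W ≤ homogeneousSubmodule (Fin (n+1)) F d := by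
    rintro _ ⟨g, hg, rfl⟩
    have := ((isHomogeneous_linForm v).pow m).mul (show g.IsHomogeneous k from hg)
    rwa [one_mul, ← hk] at this
  have hdim : Module.finrank F W = (k + n).choose n := by
    rw [← finrank_forms F n k]
    exact (Submodule.equivMapOfInjective _ hinj _).finrank_eq.symm
  have hdisj : Psub F n d A lam ⊓ W = ⊥ := by
    rw [eq_bot_iff]
    rintro _ ⟨⟨hf, hker⟩, ⟨g, hg, rfl⟩⟩
    rw [Submodule.mem_bot]
    rw [LinearMap.mulLeft_apply] at *
    have hlam : substMap (A : Matrix (Fin (n+1)) (Fin (n+1)) F) (linForm v ^ m * g)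
        = lam • (linForm v ^ m * g) := by
      simpa [sub_eq_zero] using hker
    by_contra hne
    have hl0 : lam ≠ 0 := by
      rintro rfl
      exact hne (substMap_injective A (by rw [hlam, zero_smul, map_zero]))
    have hdvd : linForm w ^ m ∣ linForm v ^ m * g := by
      have h1 : linForm w ^ m ∣ lam • (linForm v ^ m * g) := by
        rw [← hlam, substMap_mul, substMap_pow, substMap_linForm]
        exact dvd_mul_right _ _
      have := h1.trans (Dvd.intro (C lam⁻¹) rfl)
      rwa [mul_comm, ← smul_eq_C_mul, smul_smul, inv_mul_cancel₀ hl0, one_smul] at this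
    -- `linForm v ^ m * linForm w ^ m`, of degree `2 * m > d`, divides a form of degree `d`.
    obtain ⟨e, he⟩ := ((isRelPrime_linForm hv).pow).mul_dvd (dvd_mul_right _ g) hdvd
    have he0 : e ≠ 0 := by
      rintro rfl
      exact hne (by rw [he, mul_zero])
    have hdeg := (show (linForm v ^ m * g).IsHomogeneous d from hf).totalDegree hne
    have hvw := (((isHomogeneous_linForm v).pow m).mul
      ((isHomogeneous_linForm w).pow m)).totalDegree
        (mul_ne_zero (pow_ne_zero _ hv0) (pow_ne_zero _ hw0))
    rw [he, totalDegree_mul_of_isDomain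
      (mul_ne_zero (pow_ne_zero _ hv0) (pow_ne_zero _ hw0)) he0, hvw] at hdeg
    omega
  have hfin : Module.Finite F (homogeneousSubmodule (Fin (n+1)) F d) :=
    Module.finite_of_finrank_pos (by rw [finrank_forms]; exact Nat.choose_pos (by omega))
  have hP : Psub F n d A lam ≤ homogeneousSubmodule (Fin (n+1)) F d := inf_le_left
  have := Submodule.finiteDimensional_of_le hP
  have := Submodule.finiteDimensional_of_le hWd
  have hsum := Submodule.finrank_sup_add_finrank_inf_eq (Psub F n d A lam) W
  have hle := Submodule.finrank_mono (sup_le hP hWd)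
  rw [hdisj, finrank_bot, hdim] at hsum
  rw [finrank_forms] at hle
  have : d - d / 2 + n - 1 = k + n := by omega
  rw [this]
  omega
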